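/- Let T > 0, ω ∈ ℝ, let f : ℝ × ℝ × ℝⁿ → ℝⁿ be four-times continuously differentiable with all partial derivatives up to order four bounded, and let y : [0,T] × ℝ → ℝⁿ be a five-times continuously differentiable solution of ∂y/∂t + ω·∂y/∂x = f(t, x, y(t,x)) on [0,T] × ℝ with all partial derivatives up to order five bounded. Then there exists a constant C ≥ 0 such that for all t, τ with 0 ≤ t ≤ t + τ ≤ T and all x ∈ ℝ, setting Y_D = y(t, x − ωτ), k₁ = f(t, x − ωτ, Y_D), k₂ = f(t + τ/2, x − ωτ/2, Y_D + (τ/2)·k₁), k₃ = f(t + τ/2, x − ωτ/2, Y_D + (τ/2)·k₂), and k₄ = f(t + τ, x, Y_D + τ·k₃), one has ‖y(t+τ, x) − Y_D − (τ/6)·(k₁ + 2k₂ + 2k₃ + k₄)‖_∞ ≤ C·τ⁵. In particular, the local truncation error of the semi-Lagrangian Runge–Kutta order-4 method, i.e. this one-step error divided by τ, is O(τ⁴). -/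

import Mathlib

/-!
Along a characteristic the advection equation becomes an ordinary differential equation
`u' = g (t, u)` whose data are bounded uniformly in the characteristic, so it is enough to show that
the Runge–Kutta step is consistent uniformly over such a family.

Let `eⱼ` and `δⱼ` be the errors of the `j`-th stage value and slope along the exact solution. The
error of the step is the defect of Simpson's rule, which is `O(h⁵)`, plus
`(h / 6) (2 δ₂ + 2 δ₃ + δ₄)`. With `D` the state Jacobian of `g` at the midpoint of the trajectory,
linearising `g` about the solution gives `δⱼ = D eⱼ + O(h⁴)`: here `e₂` and `e₃` are `O(h²)`, and
`e₄` is `O(h³)`, which pays for moving the Jacobian from the endpoint to the midpoint. It remains to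
see that `2 e₂ + 2 e₃ + e₄ = O(h⁴)`. This sum is a quadrature defect that annihilates cubics plus
`h (δ₂ + δ₃)`, and `δ₂ + δ₃ = O(h³)` since the leading terms of `e₂` and `e₃` cancel.
-/

open Asymptotics Filter Set

section Differentiation

variable {E F G : Type*} [NormedAddCommGroup E] [NormedSpace ℝ E] [NormedAddCommGroup F]
  [NormedSpace ℝ F] [NormedAddCommGroup G] [NormedSpace ℝ G]

lemma norm_iteratedFDeriv_comp_add_clm_le {f : F → G} {k : ℕ} (hf : ContDiff ℝ k f) {B : ℝ}
    (hB : ∀ q, ‖iteratedFDeriv ℝ k f q‖ ≤ B) (p : F) (L : E →L[ℝ] F) (x : E) :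
    ‖iteratedFDeriv ℝ k (fun z => f (p + L z)) x‖ ≤ B * ‖L‖ ^ k := by
  have htranslate : ContDiff ℝ k fun z => f (p + z) := hf.comp (by fun_prop)
  have hcomp : iteratedFDeriv ℝ k (fun z => f (p + L z)) x =
      (iteratedFDeriv ℝ k f (p + L x)).compContinuousLinearMap fun _ => L := by
    rw [← iteratedFDeriv_comp_add_left, ← L.iteratedFDeriv_comp_right htranslate x le_rfl]
    rfl
  calc ‖iteratedFDeriv ℝ k (fun z => f (p + L z)) x‖
      ≤ ‖iteratedFDeriv ℝ k f (p + L x)‖ * ∏ _i : Fin k, ‖L‖ :=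
        hcomp ▸ ContinuousMultilinearMap.norm_compContinuousLinearMap_le _ _
    _ ≤ B * ‖L‖ ^ k := by
        rw [Finset.prod_const, Finset.card_univ, Fintype.card_fin]
        gcongr
        exact hB _

lemma norm_fderiv_sub_fderiv_le {f : E → F} (hf : ContDiff ℝ 2 f) {B : ℝ}
    (hB : ∀ q, ‖iteratedFDeriv ℝ 2 f q‖ ≤ B) (p q : E) :
    ‖fderiv ℝ f p - fderiv ℝ f q‖ ≤ B * ‖p - q‖ := by
  have hdiff : Differentiable ℝ (fderiv ℝ f) :=
    (hf.fderiv_right (m := 1) (by norm_num)).differentiable one_ne_zero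
  refine convex_univ.norm_image_sub_le_of_norm_fderiv_le (𝕜 := ℝ) (fun x _ => hdiff x)
    (fun x _ => ?_) (mem_univ q) (mem_univ p)
  rw [← norm_iteratedFDeriv_one, norm_iteratedFDeriv_fderiv]
  exact hB x

lemma norm_sub_sub_fderiv_apply_le {f : E → F} (hf : ContDiff ℝ 2 f) {B : ℝ}
    (hB : ∀ q, ‖iteratedFDeriv ℝ 2 f q‖ ≤ B) (p q : E) :
    ‖f p - f q - fderiv ℝ f p (p - q)‖ ≤ B * ‖p - q‖ ^ 2 := by
  have hB0 : 0 ≤ B := (norm_nonneg _).trans (hB p)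
  have hfderiv (x : E) (hx : x ∈ segment ℝ p q) :
      ‖fderiv ℝ f x - fderiv ℝ f p‖ ≤ B * ‖p - q‖ := by
    refine (norm_fderiv_sub_fderiv_le hf hB x p).trans ?_
    rw [norm_sub_rev p q]
    gcongr
    exact norm_sub_le_of_mem_segment hx
  calc ‖f p - f q - fderiv ℝ f p (p - q)‖
      ≤ B * ‖p - q‖ * ‖p - q‖ :=
        (convex_segment p q).norm_image_sub_le_of_norm_fderiv_le' (𝕜 := ℝ)
          (fun x _ => hf.differentiable two_ne_zero x) hfderiv
          (right_mem_segment ℝ p q) (left_mem_segment ℝ p q)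
    _ = B * ‖p - q‖ ^ 2 := by ring

end Differentiation

section PowerScale

variable {ι V W : Type*} {l : Filter ι} {h : ι → ℝ}

lemma isBigO_pow_of_le [NormedAddCommGroup V] {e : ι → V} {j k : ℕ}
    (he : e =O[l] fun i => h i ^ k) (hh : h =O[l] fun _ => (1 : ℝ)) (hjk : j ≤ k) :
    e =O[l] fun i => h i ^ j := by
  obtain ⟨m, rfl⟩ := Nat.exists_eq_add_of_le hjk
  refine he.trans ?_
  simpa [pow_add] using (isBigO_refl (fun i => h i ^ j) l).mul (hh.pow m)

variable [NormedAddCommGroup V] [NormedSpace ℝ V] [NormedAddCommGroup W] [NormedSpace ℝ W]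

lemma isBigO_mul_smul_pow_succ {e : ι → V} {k : ℕ} (he : e =O[l] fun i => h i ^ k) (c : ℝ) :
    (fun i => (c * h i) • e i) =O[l] fun i => h i ^ (k + 1) :=
  ((isBigO_const_mul_self c h l).smul he).congr_right fun i => by rw [smul_eq_mul, pow_succ']

lemma isBigO_clm_apply {D : ι → V →L[ℝ] W} {e : ι → V} {φ ψ : ι → ℝ} (hD : D =O[l] φ)
    (he : e =O[l] ψ) : (fun i => D i (e i)) =O[l] fun i => φ i * ψ i :=
  (isBigO_of_le l fun i => by
    rw [Real.norm_of_nonneg (by positivity)]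
    exact (D i).le_opNorm (e i)).trans (hD.norm_left.mul he.norm_left)

lemma isBigO_of_isBigO_sub_clm_apply {D : ι → V →L[ℝ] W} {e : ι → V} {δ : ι → W} {ψ : ι → ℝ}
    (hδ : (fun i => δ i - D i (e i)) =O[l] ψ) (hD : D =O[l] fun _ => (1 : ℝ)) (he : e =O[l] ψ) :
    δ =O[l] ψ := by
  have hDe : (fun i => D i (e i)) =O[l] ψ := by simpa using isBigO_clm_apply hD he
  simpa using hδ.add hDe

end PowerScale

section Taylor

variable {V : Type*} [NormedAddCommGroup V] [NormedSpace ℝ V]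

/-- The first `k` terms of the Taylor expansion of `u` at `t`, evaluated at `t + h`. -/
noncomputable def taylorSum (u : ℝ → V) (k : ℕ) (t h : ℝ) : V :=
  ∑ m ∈ Finset.range k, (h ^ m / m.factorial) • iteratedDeriv m u t

lemma norm_sub_taylorSum_le {u : ℝ → V} {k : ℕ} {A : ℝ} (hu : ContDiff ℝ k u)
    (hA : ∀ s, ‖iteratedDeriv k u s‖ ≤ A) (t : ℝ) {h : ℝ} (hh : 0 ≤ h) :
    ‖u (t + h) - taylorSum u k t h‖ ≤ A * h ^ k := by
  obtain _ | n := k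
  · simpa [taylorSum] using hA (t + h)
  have hA0 : 0 ≤ A := (norm_nonneg _).trans (hA t)
  set I := Icc t (t + h + 1)
  have hI : UniqueDiffOn ℝ I := uniqueDiffOn_Icc (by linarith)
  have hwithin {m : ℕ} (hm : m ≤ n + 1) {s : ℝ} (hs : s ∈ I) :
      iteratedDerivWithin m u I s = iteratedDeriv m u s :=
    iteratedDerivWithin_eq_iteratedDeriv hI (hu.contDiffAt.of_le (by exact_mod_cast hm)) hs
  have htaylor : taylorWithinEval u n I t (t + h) = taylorSum u (n + 1) t h := by
    rw [taylor_within_apply, taylorSum]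
    refine Finset.sum_congr rfl fun m hm => ?_
    rw [hwithin (Finset.mem_range.1 hm).le (left_mem_Icc.2 (by linarith)), add_sub_cancel_left,
      inv_mul_eq_div]
  calc ‖u (t + h) - taylorSum u (n + 1) t h‖
      ≤ A * (t + h - t) ^ (n + 1) / n.factorial := by
        rw [← htaylor]
        refine taylor_mean_remainder_bound (by linarith) hu.contDiffOn
          ⟨by linarith, by linarith⟩ fun s hs => ?_
        rw [hwithin le_rfl hs]
        exact hA s
    _ ≤ A * h ^ (n + 1) := by
        rw [add_sub_cancel_left]
        exact div_le_self (by positivity) (by exact_mod_cast n.factorial_pos)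

lemma smul_taylorSum_add_smul_taylorSum_deriv (u : ℝ → V) (k : ℕ) (t h a b c : ℝ) :
    a • taylorSum u (k + 1) t (c * h) + (b * h) • taylorSum (deriv u) k t (c * h) =
      ∑ m ∈ Finset.range (k + 1),
        ((a * c ^ m + b * (m * c ^ (m - 1))) * (h ^ m / m.factorial)) • iteratedDeriv m u t := by
  simp only [taylorSum, Finset.sum_range_succ' _ k, Finset.smul_sum, smul_add,
    ← iteratedDeriv_succ']
  rw [add_right_comm, ← Finset.sum_add_distrib]
  congr 1
  · refine Finset.sum_congr rfl fun m _ => ?_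
    rw [smul_smul, smul_smul, ← add_smul, Nat.factorial_succ, Nat.add_sub_cancel]
    congr 1
    push_cast
    field_simp
    ring
  · simp

variable {ι : Type*} {l : Filter ι} {u : ι → ℝ → V} {t h : ι → ℝ} {A : ℝ}

lemma isBigO_sub_taylorSum {k : ℕ} (hu : ∀ i, ContDiff ℝ k (u i))
    (hA : ∀ i s, ‖iteratedDeriv k (u i) s‖ ≤ A) (hh : ∀ i, 0 ≤ h i) {c : ℝ} (hc : 0 ≤ c) :
    (fun i => u i (t i + c * h i) - taylorSum (u i) k (t i) (c * h i)) =O[l] fun i => h i ^ k :=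
  isBigO_of_le' (c := A * c ^ k) l fun i => by
    have hbound := norm_sub_taylorSum_le (hu i) (hA i) (t i) (mul_nonneg hc (hh i))
    rwa [mul_pow, ← mul_assoc, ← Real.norm_of_nonneg (pow_nonneg (hh i) k)] at hbound

-- The moment condition says that the functional `∑ j, (a j * p (c j) + b j * p' (c j))` annihilates
-- the polynomials `p` of degree at most `k`.
theorem isBigO_sum_smul_add_smul_deriv {J : Type*} [Fintype J] {k : ℕ} (a b c : J → ℝ)
    (hc : ∀ j, 0 ≤ c j)
    (hmoment : ∀ m ≤ k, ∑ j, (a j * c j ^ m + b j * (m * c j ^ (m - 1))) = 0)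
    (hu : ∀ i, ContDiff ℝ (k + 1) (u i)) (hA : ∀ i s, ‖iteratedDeriv (k + 1) (u i) s‖ ≤ A)
    (hh : ∀ i, 0 ≤ h i) :
    (fun i => ∑ j, (a j • u i (t i + c j * h i) + (b j * h i) • deriv (u i) (t i + c j * h i)))
      =O[l] fun i => h i ^ (k + 1) := by
  have hu' (i) : ContDiff ℝ k (deriv (u i)) := (contDiff_succ_iff_deriv.1 (hu i)).2.2
  have hA' (i s) : ‖iteratedDeriv k (deriv (u i)) s‖ ≤ A := by
    rw [← iteratedDeriv_succ']
    exact hA i s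
  have htaylor (i) : ∑ j, (a j • taylorSum (u i) (k + 1) (t i) (c j * h i) +
      (b j * h i) • taylorSum (deriv (u i)) k (t i) (c j * h i)) = 0 := by
    simp only [smul_taylorSum_add_smul_taylorSum_deriv]
    rw [Finset.sum_comm]
    refine Finset.sum_eq_zero fun m hm => ?_
    rw [← Finset.sum_smul, ← Finset.sum_mul, hmoment m (Finset.mem_range_succ_iff.1 hm),
      zero_mul, zero_smul]
  have hremainder (j) : (fun i =>
      a j • (u i (t i + c j * h i) - taylorSum (u i) (k + 1) (t i) (c j * h i)) +
      (b j * h i) • (deriv (u i) (t i + c j * h i) - taylorSum (deriv (u i)) k (t i) (c j * h i)))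
      =O[l] fun i => h i ^ (k + 1) := by
    refine ((isBigO_sub_taylorSum (by exact_mod_cast hu) hA hh (hc j)).const_smul_left (a j)).add ?_
    exact isBigO_mul_smul_pow_succ (isBigO_sub_taylorSum hu' hA' hh (hc j)) (b j)
  refine (IsBigO.fun_sum fun j (_ : j ∈ Finset.univ) => hremainder j).congr_left fun i => ?_
  rw [← sub_zero (∑ j, (a j • u i _ + _)), ← htaylor i, ← Finset.sum_sub_distrib]
  exact Finset.sum_congr rfl fun j _ => by module

end Taylor

section RungeKutta

variable {V : Type*} [NormedAddCommGroup V] [NormedSpace ℝ V]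

/-- The second slope `k₂` of the classical Runge–Kutta step of length `h` from `(t, z)` for the
equation `u' = g (t, u)`; the first slope is `g (t, z)`. -/
noncomputable def rk4Slope₂ (g : ℝ × V → V) (t h : ℝ) (z : V) : V :=
  g (t + h / 2, z + (h / 2) • g (t, z))

/-- The third slope `k₃` of the classical Runge–Kutta step. -/
noncomputable def rk4Slope₃ (g : ℝ × V → V) (t h : ℝ) (z : V) : V :=
  g (t + h / 2, z + (h / 2) • rk4Slope₂ g t h z)

/-- The fourth slope `k₄` of the classical Runge–Kutta step. -/
noncomputable def rk4Slope₄ (g : ℝ × V → V) (t h : ℝ) (z : V) : V :=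
  g (t + h, z + h • rk4Slope₃ g t h z)

/-- One step of length `h` of the classical fourth-order Runge–Kutta method for `u' = g (t, u)`,
started from the value `z` at time `t`. -/
noncomputable def rk4Step (g : ℝ × V → V) (t h : ℝ) (z : V) : V :=
  z + (h / 6) • (g (t, z) + (2 : ℝ) • rk4Slope₂ g t h z + (2 : ℝ) • rk4Slope₃ g t h z +
    rk4Slope₄ g t h z)

/-- The error of the second stage value of the Runge–Kutta step along the exact solution `u`. -/
noncomputable def stageError₂ (g : ℝ × V → V) (u : ℝ → V) (t h : ℝ) : V :=
  u (t + h / 2) - (u t + (h / 2) • g (t, u t))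

/-- The error of the third stage value of the Runge–Kutta step along the exact solution `u`. -/
noncomputable def stageError₃ (g : ℝ × V → V) (u : ℝ → V) (t h : ℝ) : V :=
  u (t + h / 2) - (u t + (h / 2) • rk4Slope₂ g t h (u t))

/-- The error of the fourth stage value of the Runge–Kutta step along the exact solution `u`. -/
noncomputable def stageError₄ (g : ℝ × V → V) (u : ℝ → V) (t h : ℝ) : V :=
  u (t + h) - (u t + h • rk4Slope₃ g t h (u t))

/-- The error of the second slope of the Runge–Kutta step along the exact solution `u`. -/
noncomputable def slopeError₂ (g : ℝ × V → V) (u : ℝ → V) (t h : ℝ) : V :=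
  deriv u (t + h / 2) - rk4Slope₂ g t h (u t)

/-- The error of the third slope of the Runge–Kutta step along the exact solution `u`. -/
noncomputable def slopeError₃ (g : ℝ × V → V) (u : ℝ → V) (t h : ℝ) : V :=
  deriv u (t + h / 2) - rk4Slope₃ g t h (u t)

/-- The error of the fourth slope of the Runge–Kutta step along the exact solution `u`. -/
noncomputable def slopeError₄ (g : ℝ × V → V) (u : ℝ → V) (t h : ℝ) : V :=
  deriv u (t + h) - rk4Slope₄ g t h (u t)

/-- The partial derivative of `g` with respect to the state variable. -/
noncomputable def stateJacobian (g : ℝ × V → V) (p : ℝ × V) : V →L[ℝ] V :=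
  (fderiv ℝ g p).comp (ContinuousLinearMap.inr ℝ ℝ V)

/-- The state Jacobian of `g` on the trajectory `u` at the midpoint of `[t, t + h]`. -/
noncomputable def midpointJacobian (g : ℝ × V → V) (u : ℝ → V) (t h : ℝ) : V →L[ℝ] V :=
  stateJacobian g (t + h / 2, u (t + h / 2))

/-- A family of initial value problems `u' = g (t, u)` on the intervals `[t, t + h]`, of length at
most `H`, whose right-hand sides and solutions have derivatives bounded uniformly over the family by
`B` and `A` respectively. Uniform error constants are then `O`-constants over the index set. -/
structure UniformSolutionFamily {ι : Type*} (g : ι → ℝ × V → V) (u : ι → ℝ → V) (t h : ι → ℝ)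
    (A B H : ℝ) : Prop where
  contDiff_rhs : ∀ i, ContDiff ℝ 2 (g i)
  norm_iteratedFDeriv_rhs_le : ∀ i j, 1 ≤ j → j ≤ 2 → ∀ p, ‖iteratedFDeriv ℝ j (g i) p‖ ≤ B
  contDiff_sol : ∀ i, ContDiff ℝ 5 (u i)
  norm_iteratedDeriv_sol_le : ∀ i j, 1 ≤ j → j ≤ 5 → ∀ s, ‖iteratedDeriv j (u i) s‖ ≤ A
  step_nonneg : ∀ i, 0 ≤ h i
  step_le : ∀ i, h i ≤ H
  deriv_eq : ∀ i, ∀ s ∈ Icc (t i) (t i + h i), deriv (u i) s = g i (s, u i s)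

namespace UniformSolutionFamily

variable {ι : Type*} {l : Filter ι} {g : ι → ℝ × V → V} {u : ι → ℝ → V} {t h : ι → ℝ} {A B H : ℝ}

lemma deriv_start (hF : UniformSolutionFamily g u t h A B H) (i : ι) :
    deriv (u i) (t i) = g i (t i, u i (t i)) :=
  hF.deriv_eq i _ ⟨le_rfl, by linarith [hF.step_nonneg i]⟩

lemma deriv_midpoint (hF : UniformSolutionFamily g u t h A B H) (i : ι) :
    deriv (u i) (t i + h i / 2) = g i (t i + h i / 2, u i (t i + h i / 2)) :=
  hF.deriv_eq i _ ⟨by linarith [hF.step_nonneg i], by linarith [hF.step_nonneg i]⟩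

lemma deriv_endpoint (hF : UniformSolutionFamily g u t h A B H) (i : ι) :
    deriv (u i) (t i + h i) = g i (t i + h i, u i (t i + h i)) :=
  hF.deriv_eq i _ ⟨by linarith [hF.step_nonneg i], le_rfl⟩

lemma isBigO_step_one (hF : UniformSolutionFamily g u t h A B H) : h =O[l] fun _ => (1 : ℝ) :=
  isBigO_of_le' (c := H) l fun i => by
    simpa [abs_of_nonneg (hF.step_nonneg i)] using hF.step_le i

lemma isBigO_three_node {k : ℕ} (hF : UniformSolutionFamily g u t h A B H) (hk : k ≤ 4)
    (a₀ a₁ a₂ b₀ b₁ b₂ : ℝ)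
    (hmoment : ∀ m ≤ k, a₀ * 0 ^ m + b₀ * (m * 0 ^ (m - 1)) +
      (a₁ * (1 / 2) ^ m + b₁ * (m * (1 / 2) ^ (m - 1))) + (a₂ + b₂ * m) = 0) :
    (fun i => a₀ • u i (t i) + (b₀ * h i) • deriv (u i) (t i) +
      (a₁ • u i (t i + h i / 2) + (b₁ * h i) • deriv (u i) (t i + h i / 2)) +
      (a₂ • u i (t i + h i) + (b₂ * h i) • deriv (u i) (t i + h i)))
      =O[l] fun i => h i ^ (k + 1) := by
  have hnodes := isBigO_sum_smul_add_smul_deriv (l := l) (t := t) (k := k)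
    ![a₀, a₁, a₂] ![b₀, b₁, b₂] ![0, 1 / 2, 1]
    (by intro j; fin_cases j <;> norm_num) (by simpa [Fin.sum_univ_three] using hmoment)
    (fun i => (hF.contDiff_sol i).of_le (by exact_mod_cast Nat.succ_le_succ hk))
    (fun i => hF.norm_iteratedDeriv_sol_le i (k + 1) (by omega) (by omega)) hF.step_nonneg
  refine hnodes.congr_left fun i => ?_
  simp [Fin.sum_univ_three, div_eq_inv_mul]

lemma isBigO_simpson (hF : UniformSolutionFamily g u t h A B H) :
    (fun i => u i (t i + h i) - u i (t i) -
      (h i / 6) • (deriv (u i) (t i) + (4 : ℝ) • deriv (u i) (t i + h i / 2) +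
        deriv (u i) (t i + h i))) =O[l] fun i => h i ^ 5 := by
  refine (hF.isBigO_three_node le_rfl (-1) 0 1 (-1 / 6) (-4 / 6) (-1 / 6)
    fun m hm => ?_).congr_left fun i => by module
  interval_cases m <;> norm_num

lemma isBigO_backwardEuler_half (hF : UniformSolutionFamily g u t h A B H) :
    (fun i => u i (t i + h i / 2) - u i (t i) - (h i / 2) • deriv (u i) (t i + h i / 2))
      =O[l] fun i => h i ^ 2 := by
  refine (hF.isBigO_three_node (k := 1) (by norm_num) (-1) 1 0 0 (-1 / 2) 0
    fun m hm => ?_).congr_left fun i => by module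
  interval_cases m <;> norm_num

lemma isBigO_midpoint (hF : UniformSolutionFamily g u t h A B H) :
    (fun i => u i (t i + h i) - u i (t i) - h i • deriv (u i) (t i + h i / 2))
      =O[l] fun i => h i ^ 3 := by
  refine (hF.isBigO_three_node (k := 2) (by norm_num) (-1) 0 1 0 (-1) 0
    fun m hm => ?_).congr_left fun i => by module
  interval_cases m <;> norm_num

lemma isBigO_trapezoid_half (hF : UniformSolutionFamily g u t h A B H) :
    (fun i => (2 : ℝ) • (u i (t i + h i / 2) - u i (t i)) -
      (h i / 2) • (deriv (u i) (t i) + deriv (u i) (t i + h i / 2))) =O[l] fun i => h i ^ 3 := by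
  refine (hF.isBigO_three_node (k := 2) (by norm_num) (-2) 2 0 (-1 / 2) (-1 / 2) 0
    fun m hm => ?_).congr_left fun i => by module
  interval_cases m <;> norm_num

lemma isBigO_two_trapezoid_half_add_midpoint (hF : UniformSolutionFamily g u t h A B H) :
    (fun i => (4 : ℝ) • (u i (t i + h i / 2) - u i (t i)) -
        h i • (deriv (u i) (t i) + deriv (u i) (t i + h i / 2)) +
      (u i (t i + h i) - u i (t i) - h i • deriv (u i) (t i + h i / 2)))
      =O[l] fun i => h i ^ 4 := by
  refine (hF.isBigO_three_node (k := 3) (by norm_num) (-5) 4 1 (-1) (-2) 0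
    fun m hm => ?_).congr_left fun i => by module
  interval_cases m <;> norm_num

lemma isBigO_stageError₂ (hF : UniformSolutionFamily g u t h A B H) :
    (fun i => stageError₂ (g i) (u i) (t i) (h i)) =O[l] fun i => h i ^ 2 := by
  refine (hF.isBigO_three_node (k := 1) (by norm_num) (-1) 1 0 (-1 / 2) 0 0
    fun m hm => ?_).congr_left fun i => ?_
  · interval_cases m <;> norm_num
  · rw [stageError₂, hF.deriv_start]
    module

lemma isBigO_midpointJacobian (hF : UniformSolutionFamily g u t h A B H) :
    (fun i => midpointJacobian (g i) (u i) (t i) (h i)) =O[l] fun _ => (1 : ℝ) :=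
  isBigO_of_le' (c := B * ‖ContinuousLinearMap.inr ℝ ℝ V‖) l fun i => by
    rw [norm_one, mul_one]
    refine (ContinuousLinearMap.opNorm_comp_le _ _).trans ?_
    gcongr
    rw [← norm_iteratedFDeriv_one]
    exact hF.norm_iteratedFDeriv_rhs_le i 1 le_rfl one_le_two _

lemma isBigO_solution_increment (hF : UniformSolutionFamily g u t h A B H) :
    (fun i => u i (t i + h i) - u i (t i + h i / 2)) =O[l] h := by
  simpa using (hF.isBigO_three_node (l := l) (k := 0) (by norm_num) 0 (-1) 1 0 0 0
    (by simp)).congr_left fun i => by module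

lemma isBigO_stateJacobian_sub_midpointJacobian (hF : UniformSolutionFamily g u t h A B H) :
    (fun i => stateJacobian (g i) (t i + h i, u i (t i + h i)) -
      midpointJacobian (g i) (u i) (t i) (h i)) =O[l] h := by
  set p := fun i => ((t i + h i, u i (t i + h i)) : ℝ × V)
  set q := fun i => ((t i + h i / 2, u i (t i + h i / 2)) : ℝ × V)
  have hpq : (fun i => p i - q i) =O[l] h :=
    ((isBigO_const_mul_self (1 / 2) h l).congr_left fun i => by ring).prod_left
      hF.isBigO_solution_increment
  refine (isBigO_of_le' (c := B * ‖ContinuousLinearMap.inr ℝ ℝ V‖) l fun i => ?_).trans hpq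
  rw [midpointJacobian, stateJacobian, stateJacobian, ← ContinuousLinearMap.sub_comp,
    mul_right_comm]
  refine (ContinuousLinearMap.opNorm_comp_le _ _).trans ?_
  gcongr
  exact norm_fderiv_sub_fderiv_le (hF.contDiff_rhs i)
    (hF.norm_iteratedFDeriv_rhs_le i 2 one_le_two le_rfl) _ _

lemma isBigO_rhs_linearization (hF : UniformSolutionFamily g u t h A B H) {s : ι → ℝ}
    {w z : ι → V} (hwz : (fun i => w i - z i) =O[l] fun i => h i ^ 2) :
    (fun i => g i (s i, w i) - g i (s i, z i) - stateJacobian (g i) (s i, w i) (w i - z i))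
      =O[l] fun i => h i ^ 4 := by
  refine (isBigO_of_le' (c := B) (g := fun i => ‖w i - z i‖ ^ 2) l fun i => ?_).trans
    ((hwz.norm_left.pow 2).congr_right fun i => by ring)
  simpa [stateJacobian, Prod.norm_def] using norm_sub_sub_fderiv_apply_le (hF.contDiff_rhs i)
    (hF.norm_iteratedFDeriv_rhs_le i 2 one_le_two le_rfl) (s i, w i) (s i, z i)

lemma isBigO_slopeError₂_sub (hF : UniformSolutionFamily g u t h A B H) :
    (fun i => slopeError₂ (g i) (u i) (t i) (h i) -
      midpointJacobian (g i) (u i) (t i) (h i) (stageError₂ (g i) (u i) (t i) (h i)))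
      =O[l] fun i => h i ^ 4 := by
  simp only [slopeError₂, hF.deriv_midpoint]
  exact hF.isBigO_rhs_linearization hF.isBigO_stageError₂

lemma isBigO_slopeError₂ (hF : UniformSolutionFamily g u t h A B H) :
    (fun i => slopeError₂ (g i) (u i) (t i) (h i)) =O[l] fun i => h i ^ 2 :=
  isBigO_of_isBigO_sub_clm_apply
    (isBigO_pow_of_le hF.isBigO_slopeError₂_sub hF.isBigO_step_one (by norm_num))
    hF.isBigO_midpointJacobian hF.isBigO_stageError₂

lemma isBigO_stageError₃ (hF : UniformSolutionFamily g u t h A B H) :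
    (fun i => stageError₃ (g i) (u i) (t i) (h i)) =O[l] fun i => h i ^ 2 := by
  refine (hF.isBigO_backwardEuler_half.add (isBigO_pow_of_le
    (isBigO_mul_smul_pow_succ hF.isBigO_slopeError₂ (1 / 2)) hF.isBigO_step_one
    (by norm_num))).congr_left fun i => ?_
  rw [stageError₃, slopeError₂]
  module

lemma isBigO_stageError₂_add_stageError₃ (hF : UniformSolutionFamily g u t h A B H) :
    (fun i => stageError₂ (g i) (u i) (t i) (h i) + stageError₃ (g i) (u i) (t i) (h i))
      =O[l] fun i => h i ^ 3 := by
  refine (hF.isBigO_trapezoid_half.add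
    (isBigO_mul_smul_pow_succ hF.isBigO_slopeError₂ (1 / 2))).congr_left fun i => ?_
  rw [stageError₂, stageError₃, slopeError₂, hF.deriv_start]
  module

lemma isBigO_slopeError₃_sub (hF : UniformSolutionFamily g u t h A B H) :
    (fun i => slopeError₃ (g i) (u i) (t i) (h i) -
      midpointJacobian (g i) (u i) (t i) (h i) (stageError₃ (g i) (u i) (t i) (h i)))
      =O[l] fun i => h i ^ 4 := by
  simp only [slopeError₃, hF.deriv_midpoint]
  exact hF.isBigO_rhs_linearization hF.isBigO_stageError₃

lemma isBigO_slopeError₃ (hF : UniformSolutionFamily g u t h A B H) :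
    (fun i => slopeError₃ (g i) (u i) (t i) (h i)) =O[l] fun i => h i ^ 2 :=
  isBigO_of_isBigO_sub_clm_apply
    (isBigO_pow_of_le hF.isBigO_slopeError₃_sub hF.isBigO_step_one (by norm_num))
    hF.isBigO_midpointJacobian hF.isBigO_stageError₃

lemma isBigO_slopeError₂_add_slopeError₃ (hF : UniformSolutionFamily g u t h A B H) :
    (fun i => slopeError₂ (g i) (u i) (t i) (h i) + slopeError₃ (g i) (u i) (t i) (h i))
      =O[l] fun i => h i ^ 3 := by
  refine isBigO_of_isBigO_sub_clm_apply (isBigO_pow_of_le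
    ((hF.isBigO_slopeError₂_sub.add hF.isBigO_slopeError₃_sub).congr_left fun i => ?_)
    hF.isBigO_step_one (by norm_num)) hF.isBigO_midpointJacobian
    hF.isBigO_stageError₂_add_stageError₃
  rw [map_add]
  module

lemma isBigO_stageError₄ (hF : UniformSolutionFamily g u t h A B H) :
    (fun i => stageError₄ (g i) (u i) (t i) (h i)) =O[l] fun i => h i ^ 3 := by
  refine (hF.isBigO_midpoint.add
    (isBigO_mul_smul_pow_succ hF.isBigO_slopeError₃ 1)).congr_left fun i => ?_
  rw [stageError₄, slopeError₃]
  module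

lemma isBigO_weighted_stageError (hF : UniformSolutionFamily g u t h A B H) :
    (fun i => (2 : ℝ) • stageError₂ (g i) (u i) (t i) (h i) +
      (2 : ℝ) • stageError₃ (g i) (u i) (t i) (h i) + stageError₄ (g i) (u i) (t i) (h i))
      =O[l] fun i => h i ^ 4 := by
  refine (hF.isBigO_two_trapezoid_half_add_midpoint.add
    (isBigO_mul_smul_pow_succ hF.isBigO_slopeError₂_add_slopeError₃ 1)).congr_left fun i => ?_
  rw [stageError₂, stageError₃, stageError₄, slopeError₂, slopeError₃, hF.deriv_start]
  module

lemma isBigO_slopeError₄_sub (hF : UniformSolutionFamily g u t h A B H) :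
    (fun i => slopeError₄ (g i) (u i) (t i) (h i) -
      midpointJacobian (g i) (u i) (t i) (h i) (stageError₄ (g i) (u i) (t i) (h i)))
      =O[l] fun i => h i ^ 4 := by
  have hlinear : (fun i => slopeError₄ (g i) (u i) (t i) (h i) -
      stateJacobian (g i) (t i + h i, u i (t i + h i)) (stageError₄ (g i) (u i) (t i) (h i)))
      =O[l] fun i => h i ^ 4 := by
    simp only [slopeError₄, hF.deriv_endpoint]
    exact hF.isBigO_rhs_linearization
      (isBigO_pow_of_le hF.isBigO_stageError₄ hF.isBigO_step_one (by norm_num))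
  have hincrement := (isBigO_clm_apply (l := l) hF.isBigO_stateJacobian_sub_midpointJacobian
    hF.isBigO_stageError₄).congr_right fun i => (pow_succ' (h i) 3).symm
  exact (hlinear.add hincrement).congr_left fun i => by
    rw [sub_apply, sub_add_sub_cancel]

lemma isBigO_weighted_slopeError (hF : UniformSolutionFamily g u t h A B H) :
    (fun i => (2 : ℝ) • slopeError₂ (g i) (u i) (t i) (h i) +
      (2 : ℝ) • slopeError₃ (g i) (u i) (t i) (h i) + slopeError₄ (g i) (u i) (t i) (h i))
      =O[l] fun i => h i ^ 4 := by
  refine isBigO_of_isBigO_sub_clm_apply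
    ((((hF.isBigO_slopeError₂_sub.const_smul_left (2 : ℝ)).add
      (hF.isBigO_slopeError₃_sub.const_smul_left (2 : ℝ))).add
      hF.isBigO_slopeError₄_sub).congr_left fun i => ?_)
    hF.isBigO_midpointJacobian hF.isBigO_weighted_stageError
  simp only [map_add, map_smul, Pi.smul_apply]
  module

theorem isBigO_sub_rk4Step (hF : UniformSolutionFamily g u t h A B H) :
    (fun i => u i (t i + h i) - rk4Step (g i) (t i) (h i) (u i (t i))) =O[l] fun i => h i ^ 5 := by
  refine (hF.isBigO_simpson.add
    (isBigO_mul_smul_pow_succ hF.isBigO_weighted_slopeError (1 / 6))).congr_left fun i => ?_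
  rw [rk4Step, slopeError₂, slopeError₃, slopeError₄, hF.deriv_start]
  module

end UniformSolutionFamily

end RungeKutta

section SemiLagrangian

variable {E V : Type*} [NormedAddCommGroup E] [NormedSpace ℝ E] [NormedAddCommGroup V]
  [NormedSpace ℝ V]

/-- The space-time point at time `s` on the characteristic line, with velocity `ω`, that arrives at
`x` at time `t`. -/
def characteristic (ω : E) (t : ℝ) (x : E) (s : ℝ) : ℝ × E :=
  (s, x - (t - s) • ω)

/-- The right-hand side of the ordinary differential equation to which the advection equation with
right-hand side `f` reduces along the characteristic arriving at `x` at time `t`. -/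
def characteristicRHS (f : ℝ × E × V → V) (ω : E) (t : ℝ) (x : E) (p : ℝ × V) : V :=
  f (p.1, x - (t - p.1) • ω, p.2)

/-- The linear part of the affine map from the `(time, state)` variables to the
`(time, space, state)` variables along a characteristic with velocity `ω`. -/
def characteristicLift (ω : E) : ℝ × V →L[ℝ] ℝ × E × V :=
  (ContinuousLinearMap.fst ℝ ℝ V).prod
    (((ContinuousLinearMap.fst ℝ ℝ V).smulRight ω).prod (ContinuousLinearMap.snd ℝ ℝ V))

lemma characteristic_eq_add_smul (ω : E) (t : ℝ) (x : E) :
    characteristic ω t x = fun s => (0, x - t • ω) + s • (1, ω) := by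
  ext s <;> simp [characteristic, sub_smul]; abel

lemma deriv_comp_characteristic {y : ℝ × E → V} (hy : Differentiable ℝ y) (ω : E) (t : ℝ) (x : E)
    (s : ℝ) : deriv (fun s => y (characteristic ω t x s)) s =
      fderiv ℝ y (characteristic ω t x s) (1, ω) := by
  have hchar : HasDerivAt (characteristic ω t x) (1, ω) s := by
    rw [characteristic_eq_add_smul]
    simpa using ((hasDerivAt_id s).smul_const ((1, ω) : ℝ × E)).const_add (0, x - t • ω)
  exact ((hy _).hasFDerivAt.comp_hasDerivAt s hchar).deriv

lemma norm_iteratedDeriv_comp_characteristic_le {y : ℝ × E → V} {k : ℕ} (hy : ContDiff ℝ k y)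
    {A : ℝ} (hA : ∀ q, ‖iteratedFDeriv ℝ k y q‖ ≤ A) (ω : E) (t : ℝ) (x : E) (s : ℝ) :
    ‖iteratedDeriv k (fun s => y (characteristic ω t x s)) s‖ ≤
      A * ‖ContinuousLinearMap.toSpanSingleton ℝ ((1, ω) : ℝ × E)‖ ^ k := by
  rw [← norm_iteratedFDeriv_eq_norm_iteratedDeriv, characteristic_eq_add_smul]
  exact norm_iteratedFDeriv_comp_add_clm_le hy hA _ (ContinuousLinearMap.toSpanSingleton ℝ _) s

lemma characteristicRHS_eq_comp_add_clm (f : ℝ × E × V → V) (ω : E) (t : ℝ) (x : E) :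
    characteristicRHS f ω t x = fun p => f ((0, x - t • ω, 0) + characteristicLift ω p) := by
  ext p
  simp [characteristicRHS, characteristicLift, sub_smul, sub_add]

lemma contDiff_comp_characteristic {y : ℝ × E → V} {k : WithTop ℕ∞} (hy : ContDiff ℝ k y) (ω : E)
    (t : ℝ) (x : E) : ContDiff ℝ k fun s => y (characteristic ω t x s) := by
  rw [characteristic_eq_add_smul]
  exact hy.comp (by fun_prop)

lemma contDiff_characteristicRHS {f : ℝ × E × V → V} {k : WithTop ℕ∞} (hf : ContDiff ℝ k f) (ω : E)
    (t : ℝ) (x : E) : ContDiff ℝ k (characteristicRHS f ω t x) := by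
  rw [characteristicRHS_eq_comp_add_clm]
  exact hf.comp (by fun_prop)

lemma norm_iteratedFDeriv_characteristicRHS_le {f : ℝ × E × V → V} {k : ℕ} (hf : ContDiff ℝ k f)
    {B : ℝ} (hB : ∀ q, ‖iteratedFDeriv ℝ k f q‖ ≤ B) (ω : E) (t : ℝ) (x : E) (p : ℝ × V) :
    ‖iteratedFDeriv ℝ k (characteristicRHS f ω t x) p‖ ≤
      B * ‖(characteristicLift ω : ℝ × V →L[ℝ] ℝ × E × V)‖ ^ k := by
  rw [characteristicRHS_eq_comp_add_clm]
  exact norm_iteratedFDeriv_comp_add_clm_le hf hB _ _ p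

lemma deriv_comp_characteristic_eq {y : ℝ × E → V} {f : ℝ × E × V → V} {ω : E} {T : ℝ}
    (hy : Differentiable ℝ y)
    (hpde : ∀ t ∈ Icc 0 T, ∀ x, fderiv ℝ y (t, x) (1, ω) = f (t, x, y (t, x)))
    (t : ℝ) (x : E) {s : ℝ} (hs : s ∈ Icc 0 T) :
    deriv (fun s => y (characteristic ω t x s)) s =
      characteristicRHS f ω t x (s, y (characteristic ω t x s)) :=
  (deriv_comp_characteristic hy ω t x s).trans (hpde s hs _)

lemma mul_pow_le_mul_max_one_pow {A r : ℝ} (hA : 0 ≤ A) (hr : 0 ≤ r) {j k : ℕ} (hjk : j ≤ k) :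
    A * r ^ j ≤ A * max 1 r ^ k := by
  gcongr
  exact (pow_le_pow_left₀ hr (le_max_right 1 r) j).trans (pow_le_pow_right₀ (le_max_left 1 r) hjk)

lemma uniformSolutionFamily_characteristic {ι : Type*} {f : ℝ × E × V → V} {y : ℝ × E → V} {ω : E}
    {A B T : ℝ} (hf : ContDiff ℝ 2 f)
    (hfb : ∀ j : ℕ, 1 ≤ j → j ≤ 2 → ∀ p, ‖iteratedFDeriv ℝ j f p‖ ≤ B) (hy : ContDiff ℝ 5 y)
    (hyb : ∀ j : ℕ, 1 ≤ j → j ≤ 5 → ∀ p, ‖iteratedFDeriv ℝ j y p‖ ≤ A)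
    (hpde : ∀ t ∈ Icc 0 T, ∀ x, fderiv ℝ y (t, x) (1, ω) = f (t, x, y (t, x)))
    {t τ : ι → ℝ} (x : ι → E) (ht : ∀ i, 0 ≤ t i) (hτ : ∀ i, 0 ≤ τ i) (htτ : ∀ i, t i + τ i ≤ T) :
    UniformSolutionFamily (fun i => characteristicRHS f ω (t i + τ i) (x i))
      (fun i s => y (characteristic ω (t i + τ i) (x i) s)) t τ
      (A * max 1 ‖ContinuousLinearMap.toSpanSingleton ℝ ((1, ω) : ℝ × E)‖ ^ 5)
      (B * max 1 ‖(characteristicLift ω : ℝ × V →L[ℝ] ℝ × E × V)‖ ^ 2) T where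
  contDiff_rhs i := contDiff_characteristicRHS hf _ _ _
  norm_iteratedFDeriv_rhs_le i j h1 h2 p :=
    (norm_iteratedFDeriv_characteristicRHS_le (hf.of_le (by exact_mod_cast h2)) (hfb j h1 h2)
      _ _ _ p).trans <| mul_pow_le_mul_max_one_pow
        ((norm_nonneg _).trans (hfb j h1 h2 0)) (norm_nonneg _) h2
  contDiff_sol i := contDiff_comp_characteristic hy _ _ _
  norm_iteratedDeriv_sol_le i j h1 h5 s :=
    (norm_iteratedDeriv_comp_characteristic_le (hy.of_le (by exact_mod_cast h5)) (hyb j h1 h5)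
      _ _ _ s).trans <| mul_pow_le_mul_max_one_pow
        ((norm_nonneg _).trans (hyb j h1 h5 0)) (norm_nonneg _) h5
  step_nonneg := hτ
  step_le i := by linarith [ht i, htτ i]
  deriv_eq i s hs := deriv_comp_characteristic_eq (hy.differentiable (by norm_num)) hpde _ _
    ⟨(ht i).trans hs.1, hs.2.trans (htτ i)⟩

theorem stmt_13_general (T : ℝ) (ω : E) (f : ℝ × E × V → V) (hf : ContDiff ℝ 2 f)
    (hfb : ∃ B : ℝ, ∀ j : ℕ, 1 ≤ j → j ≤ 2 → ∀ p, ‖iteratedFDeriv ℝ j f p‖ ≤ B)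
    (y : ℝ × E → V) (hy : ContDiff ℝ 5 y)
    (hyb : ∃ A : ℝ, ∀ j : ℕ, 1 ≤ j → j ≤ 5 → ∀ p, ‖iteratedFDeriv ℝ j y p‖ ≤ A)
    (hpde : ∀ t ∈ Icc 0 T, ∀ x, fderiv ℝ y (t, x) (1, ω) = f (t, x, y (t, x))) :
    ∃ C : ℝ, 0 ≤ C ∧ ∀ (t τ : ℝ) (x : E), 0 ≤ t → 0 ≤ τ → t + τ ≤ T →
      ‖y (t + τ, x) - rk4Step (characteristicRHS f ω (t + τ) x) t τ (y (t, x - τ • ω))‖ ≤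
        C * τ ^ 5 := by
  obtain ⟨B, hB⟩ := hfb
  obtain ⟨A, hA⟩ := hyb
  let ι := {q : ℝ × ℝ × E // 0 ≤ q.1 ∧ 0 ≤ q.2.1 ∧ q.1 + q.2.1 ≤ T}
  have hfamily := uniformSolutionFamily_characteristic hf hB hy hA hpde (ι := ι)
    (fun i => i.1.2.2) (fun i => i.2.1) (fun i => i.2.2.1) (fun i => i.2.2.2)
  obtain ⟨C, hC⟩ := isBigO_top.1 hfamily.isBigO_sub_rk4Step
  refine ⟨max C 0, le_max_right _ _, fun t τ x ht hτ htT => ?_⟩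
  calc ‖y (t + τ, x) - rk4Step (characteristicRHS f ω (t + τ) x) t τ (y (t, x - τ • ω))‖
      ≤ C * τ ^ 5 := by
        simpa [characteristic, abs_of_nonneg hτ] using hC ⟨(t, τ, x), ht, hτ, htT⟩
    _ ≤ max C 0 * τ ^ 5 := by
        gcongr
        exact le_max_left C 0

end SemiLagrangian

/-- Local truncation error of the semi-Lagrangian Runge–Kutta order-4 method
(Algorithm 4) for constant advection speed `ω`: if `f` is `C⁴` with bounded
derivatives up to order four and `y` is a `C⁵` solution of
`∂y/∂t + ω ∂y/∂x = f(t,x,y)` on `[0,T] × ℝ` with bounded derivatives up to order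
five, then there is `C ≥ 0` such that the one-step error of the classical
fourth-order Runge–Kutta step along the characteristic is at most `Cτ⁵`; i.e. the
local truncation error is `O(τ⁴)`. -/
theorem stmt_13 (n : ℕ) (T ω : ℝ) (hT : 0 < T)
    (f : ℝ → ℝ → (Fin n → ℝ) → (Fin n → ℝ))
    (hf : ContDiff ℝ 4 fun p : ℝ × ℝ × (Fin n → ℝ) => f p.1 p.2.1 p.2.2)
    (hfb : ∃ B : ℝ, ∀ j : ℕ, 1 ≤ j → j ≤ 4 → ∀ p : ℝ × ℝ × (Fin n → ℝ),
      ‖iteratedFDeriv ℝ j (fun q : ℝ × ℝ × (Fin n → ℝ) => f q.1 q.2.1 q.2.2) p‖ ≤ B)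
    (y : ℝ × ℝ → (Fin n → ℝ))
    (hy : ContDiff ℝ 5 y)
    (hyb : ∃ B : ℝ, ∀ j : ℕ, 1 ≤ j → j ≤ 5 → ∀ p : ℝ × ℝ,
      ‖iteratedFDeriv ℝ j y p‖ ≤ B)
    (hpde : ∀ t ∈ Set.Icc (0 : ℝ) T, ∀ x : ℝ,
      fderiv ℝ y (t, x) (1, ω) = f t x (y (t, x))) :
    ∃ C : ℝ, 0 ≤ C ∧ ∀ (t τ x : ℝ), 0 ≤ t → 0 ≤ τ → t + τ ≤ T →
      let YD := y (t, x - ω * τ)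
      let k₁ := f t (x - ω * τ) YD
      let k₂ := f (t + τ / 2) (x - ω * τ / 2) (YD + (τ / 2) • k₁)
      let k₃ := f (t + τ / 2) (x - ω * τ / 2) (YD + (τ / 2) • k₂)
      let k₄ := f (t + τ) x (YD + τ • k₃)
      ‖y (t + τ, x) - YD
          - (τ / 6) • (k₁ + (2 : ℝ) • k₂ + (2 : ℝ) • k₃ + k₄)‖ ≤ C * τ ^ 5 := by
  obtain ⟨C, hC0, hC⟩ := stmt_13_general T ω _ (hf.of_le (by norm_num))
    (hfb.imp fun B hB j h1 h2 => hB j h1 (by omega)) y hy hyb hpde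
  refine ⟨C, hC0, fun t τ x ht hτ htT => ?_⟩
  have hmid : t + τ - (t + τ / 2) = τ / 2 := by ring
  simpa [rk4Step, rk4Slope₂, rk4Slope₃, rk4Slope₄, characteristicRHS, sub_sub, hmid,
    mul_comm, mul_div_assoc] using hC t τ x ht hτ htT
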